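/- Let r ∈ (0,1]. There exists a constant C > 0 such that for every T > 0 and every φ₀ ∈ H¹(ℝ) ∩ L²(|x|^{2r}dx): sup_{t ∈ [0,T]} ‖|x|^r e^{it∂_x²} φ₀‖_{L²} ≤ C[(T^{r/2} + T^{r})‖φ₀‖_{H¹} + ‖|x|^r φ₀‖_{L²}]. -/

import Mathlib

open MeasureTheory Filter
open scoped ENNReal NNReal

noncomputable section

/-- The Fourier transform `f̂(ξ) = ∫ e^{-ixξ} f(x) dx` (paper convention). -/
def fourierT (f : ℝ → ℂ) (ξ : ℝ) : ℂ :=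
  ∫ x : ℝ, Complex.exp (-(Complex.I * x * ξ)) * f x

/-- The Sobolev `H^s` norm `(∫ (1+|ξ|²)^s |f̂(ξ)|² dξ)^{1/2}`. -/
def HsNorm (s : ℝ) (f : ℝ → ℂ) : ℝ≥0∞ :=
  (∫⁻ ξ : ℝ, ENNReal.ofReal ((1 + ξ ^ 2) ^ s * ‖fourierT f ξ‖ ^ 2)) ^ (1/2 : ℝ)

/-- Membership in the Sobolev space `H^s(ℝ)`. -/
def MemHs (s : ℝ) (f : ℝ → ℂ) : Prop := HsNorm s f < ⊤

/-- The weighted norm `‖|x|^r f‖_{L²} = (∫ |f(x)|² |x|^{2r} dx)^{1/2}`. -/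
def wNorm (r : ℝ) (f : ℝ → ℂ) : ℝ≥0∞ :=
  (∫⁻ x : ℝ, (‖f x‖₊ : ℝ≥0∞) ^ 2 * ENNReal.ofReal (|x| ^ (2 * r))) ^ (1/2 : ℝ)

/-- Membership in the weighted space `L²(|x|^{2r} dx)`. -/
def MemW (r : ℝ) (f : ℝ → ℂ) : Prop := wNorm r f < ⊤

/-- The mixed norm `‖u‖_{L^∞_T L²_x}` (functions written as `u x t`). -/
def LinfL2 (T : ℝ) (u : ℝ → ℝ → ℂ) : ℝ≥0∞ :=
  ⨆ t ∈ Set.Icc (0:ℝ) T, eLpNorm (fun x => u x t) 2 volume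

/-- The mixed norm `‖u‖_{L⁴_T L^∞_x}`. -/
def L4Linf (T : ℝ) (u : ℝ → ℝ → ℂ) : ℝ≥0∞ :=
  (∫⁻ t in Set.Icc (0:ℝ) T, eLpNorm (fun x => u x t) ⊤ volume ^ (4:ℕ)) ^ (1/4 : ℝ)

/-- The norm `⦀u⦀ = ‖u‖_{L^∞_T L²_x} + ‖u‖_{L⁴_T L^∞_x}`. -/
def tnorm (T : ℝ) (u : ℝ → ℝ → ℂ) : ℝ≥0∞ := LinfL2 T u + L4Linf T u

/-- The mixed norm `‖u‖_{L^∞_T H^s_x}`. -/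
def LinfHs (T s : ℝ) (u : ℝ → ℝ → ℂ) : ℝ≥0∞ :=
  ⨆ t ∈ Set.Icc (0:ℝ) T, HsNorm s (fun x => u x t)

/-- The mixed norm `‖|x|^r u‖_{L^∞_T L²_x}`. -/
def LinfW (T r : ℝ) (u : ℝ → ℝ → ℂ) : ℝ≥0∞ :=
  ⨆ t ∈ Set.Icc (0:ℝ) T, wNorm r (fun x => u x t)

/-- The gaugeFactor factor `exp(iλ ∫_{-∞}^x |f(y)|² dy)`. -/
def gaugeFactor (l : ℝ) (f : ℝ → ℂ) (x : ℝ) : ℂ :=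
  Complex.exp (Complex.I * (l : ℂ) * ((∫ y in Set.Iic x, Complex.normSq (f y) : ℝ) : ℂ))

/-- The free Schrödinger group `e^{it∂_x²}`, given by the multiplier `e^{-itξ²}`:
`(e^{it∂_x²}f)(x) = (2π)⁻¹ ∫ e^{ixξ} e^{-itξ²} f̂(ξ) dξ`. -/
def schrod (t : ℝ) (f : ℝ → ℂ) (x : ℝ) : ℂ :=
  (2 * Real.pi : ℂ)⁻¹ * ∫ ξ : ℝ, Complex.exp (Complex.I * (x * ξ - t * ξ ^ 2)) * fourierT f ξ

/-- Spatial derivative `∂_x u` of a function `u = u(x,t)`. -/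
def dx (u : ℝ → ℝ → ℂ) : ℝ → ℝ → ℂ := fun x t => deriv (fun y => u y t) x

/-- `u` solves the DNLS equation `i∂_t u + ∂_x² u = iλ∂_x(|u|²u)` on `ℝ × (0,T]`. -/
def solvesDNLS (l T : ℝ) (u : ℝ → ℝ → ℂ) : Prop :=
  ∀ x : ℝ, ∀ t ∈ Set.Ioc (0:ℝ) T,
    Complex.I * deriv (fun τ => u x τ) t + deriv (fun y => deriv (fun z => u z t) y) x
      = Complex.I * (l : ℂ) * deriv (fun y => (Complex.normSq (u y t) : ℂ) * u y t) x

/-- `(φ, ψ)` solves the NLS system `i∂_t φ + ∂_x² φ = -iλφ²ψ̄`, `i∂_t ψ + ∂_x² ψ = iλψ²φ̄`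
on `ℝ × (0,T]`. -/
def solvesNLS (l T : ℝ) (φ ψ : ℝ → ℝ → ℂ) : Prop :=
  (∀ x : ℝ, ∀ t ∈ Set.Ioc (0:ℝ) T,
    Complex.I * deriv (fun τ => φ x τ) t + deriv (fun y => deriv (fun z => φ z t) y) x
      = -(Complex.I * (l : ℂ)) * (φ x t) ^ 2 * (starRingEnd ℂ) (ψ x t)) ∧
  (∀ x : ℝ, ∀ t ∈ Set.Ioc (0:ℝ) T,
    Complex.I * deriv (fun τ => ψ x τ) t + deriv (fun y => deriv (fun z => ψ z t) y) x
      = Complex.I * (l : ℂ) * (ψ x t) ^ 2 * (starRingEnd ℂ) (φ x t))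

/-- Regularity class `C([0,T];H²(ℝ)) ∩ C¹([0,T];L²(ℝ))` (rendered as: joint continuity,
`H²` in space at each time, differentiability in time, time derivative in `L² = H⁰`). -/
def regClass (T : ℝ) (u : ℝ → ℝ → ℂ) : Prop :=
  Continuous (fun p : ℝ × ℝ => u p.1 p.2) ∧
  (∀ t ∈ Set.Icc (0:ℝ) T, MemHs 2 (fun x => u x t)) ∧
  (∀ x : ℝ, ∀ t ∈ Set.Icc (0:ℝ) T, DifferentiableAt ℝ (fun τ => u x τ) t) ∧
  (∀ t ∈ Set.Icc (0:ℝ) T, MemHs 0 (fun x => deriv (fun τ => u x τ) t))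

/-- `(φ, ψ)` is a solution of the NLS system with data `(φ₀, ψ₀)` that stays in
`H²(ℝ) ∩ L²(|x|^{2r}dx)` on `(0,T]`. -/
def goodSol (l r T : ℝ) (φ₀ ψ₀ : ℝ → ℂ) (φ ψ : ℝ → ℝ → ℂ) : Prop :=
  solvesNLS l T φ ψ ∧ (∀ x, φ x 0 = φ₀ x) ∧ (∀ x, ψ x 0 = ψ₀ x) ∧
  ∀ t ∈ Set.Ioc (0:ℝ) T, MemHs 2 (fun x => φ x t) ∧ MemW r (fun x => φ x t) ∧
    MemHs 2 (fun x => ψ x t) ∧ MemW r (fun x => ψ x t)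

end

/-!
Multiplication by `e^{ixh}` translates the Fourier side by `h`, and translation nearly commutes with
the multiplier `e^{-itξ²}`: between the endpoints of an interval of length `h` centred at `m` the
phase changes by exactly `2tmh`. Plancherel's theorem therefore bounds `‖(e^{ixh} - 1) e^{it∂ₓ²}f‖`
in terms of `‖(e^{ixh/2} - 1) f‖` and `‖(e^{2itξh} - 1) f̂‖`, for every `h`. For `0 < r < 1` the
weight `|x|^{2r}` is a superposition of the weights `|e^{ixh} - 1|²` with density a multiple of
`|h|^{-1-2r}`, and for `r = 1` it is their limit `|e^{ixh} - 1|²/h²` as `h → 0`. So the bounds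
integrate to one for `|x|^{2r}`, in which `f̂` is weighted by `|2tξ|^{2r} ≤ 4|t|^{2r}|ξ|^{2r}`.
-/

section Plancherel

open scoped FourierTransform ContDiff SchwartzMap

variable {V E H : Type*} [NormedAddCommGroup V] [InnerProductSpace ℝ V] [FiniteDimensional ℝ V]
  [MeasurableSpace V] [BorelSpace V] [NormedAddCommGroup E] [NormedSpace ℂ E]
  [NormedAddCommGroup H] [InnerProductSpace ℂ H] [CompleteSpace H]

lemma continuous_fourier_of_integrable {g : V → E} (hg : Integrable g) : Continuous (𝓕 g) :=
  VectorFourier.fourierIntegral_continuous Real.continuous_fourierChar continuous_inner hg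

lemma integral_schwartzMap_fourier_smul [CompleteSpace E] (ψ : 𝓢(V, ℂ)) {g : V → E}
    (hg : Integrable g) : ∫ x, 𝓕 ψ x • g x = ∫ ξ, ψ ξ • 𝓕 g ξ := by
  simpa using! VectorFourier.integral_bilin_fourierIntegral_eq_flip (.lsmul ℂ ℂ)
    (L := innerₗ V) Real.continuous_fourierChar continuous_inner ψ.integrable hg

lemma fourier_toLp_ae_eq {g : V → H} (hg : Integrable g) (hg2 : MemLp g 2) :
    (𝓕 (hg2.toLp g) : Lp H 2 (volume : Measure V)) =ᵐ[volume] 𝓕 g := by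
  refine ae_eq_of_integral_contDiff_smul_eq ((Lp.memLp _).locallyIntegrable one_le_two)
    (continuous_fourier_of_integrable hg).locallyIntegrable fun ψ hψ hψc => ?_
  let Ψ : 𝓢(V, ℂ) := (hψc.comp_left (g := ((↑) : ℝ → ℂ)) Complex.ofReal_zero).toSchwartzMap
    (Complex.ofRealCLM.contDiff.comp hψ)
  have real_smul_eq (F : V → H) : ∫ ξ, ψ ξ • F ξ = ∫ ξ, Ψ ξ • F ξ :=
    integral_congr_ae (.of_forall fun ξ => RCLike.real_smul_eq_coe_smul (K := ℂ) _ _)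
  calc ∫ ξ, ψ ξ • (𝓕 (hg2.toLp g) : Lp H 2 (volume : Measure V)) ξ
      = ∫ x, 𝓕 Ψ x • hg2.toLp g x := by
        rw [real_smul_eq]
        simpa using (congrArg (· Ψ) (Lp.fourier_toTemperedDistribution_eq (hg2.toLp g))).symm
    _ = ∫ x, 𝓕 Ψ x • g x := integral_congr_ae (hg2.coeFn_toLp.mono fun x hx => by simp only [hx])
    _ = ∫ ξ, ψ ξ • 𝓕 g ξ := by rw [integral_schwartzMap_fourier_smul Ψ hg, real_smul_eq]

lemma eLpNorm_fourier_eq {g : V → H} (hg : Integrable g) (hg2 : MemLp g 2) :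
    eLpNorm (𝓕 g) 2 = eLpNorm g 2 := by
  rw [← eLpNorm_congr_ae (fourier_toLp_ae_eq hg hg2), ← eLpNorm_congr_ae hg2.coeFn_toLp,
    ← Lp.enorm_def, ← Lp.enorm_def, enorm_eq_iff_norm_eq, Lp.norm_fourier_eq]

lemma eLpNorm_two_pow_two {α : Type*} [MeasurableSpace α] {F : Type*} [NormedAddCommGroup F]
    (μ : Measure α) (f : α → F) : eLpNorm f 2 μ ^ 2 = ∫⁻ x, ‖f x‖ₑ ^ 2 ∂μ := by
  simpa using eLpNorm_nnreal_pow_eq_lintegral (f := f) (μ := μ) (p := 2) two_ne_zero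

lemma lintegral_enorm_sq_fourier_le {g : V → H} (hg : Integrable g) :
    ∫⁻ ξ, ‖𝓕 g ξ‖ₑ ^ 2 ≤ ∫⁻ x, ‖g x‖ₑ ^ 2 := by
  rw [← eLpNorm_two_pow_two, ← eLpNorm_two_pow_two]
  obtain hg2 | hg2 := eq_or_ne (eLpNorm g 2) ⊤
  · simp [hg2]
  · rw [eLpNorm_fourier_eq hg ⟨hg.1, hg2.lt_top⟩]

end Plancherel

lemma lintegral_comp_mul_right_eq (F : ℝ → ℝ≥0∞) {a : ℝ} (ha : a ≠ 0) :
    ∫⁻ x, F (x * a) = ENNReal.ofReal |a⁻¹| * ∫⁻ x, F x := by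
  rw [← smul_eq_mul, ← lintegral_smul_measure, ← Real.map_volume_mul_right ha]
  exact ((Homeomorph.mulRight₀ a ha).measurableEmbedding.lintegral_map F).symm

lemma lintegral_map_withDensity {α β : Type*} [MeasurableSpace α] [MeasurableSpace β]
    {μ : Measure α} {w : α → ℝ≥0∞} (hw : AEMeasurable w μ) {T : α → β} (hT : Measurable T)
    {φ : β → ℝ≥0∞} (hφ : Measurable φ) :
    ∫⁻ y, φ y ∂(μ.withDensity w).map T = ∫⁻ x, w x * φ (T x) ∂μ := by
  rw [lintegral_map hφ hT]
  exact lintegral_withDensity_eq_lintegral_mul₀ hw (hφ.comp hT).aemeasurable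

section FourierT

open scoped FourierTransform

variable {f g : ℝ → ℂ}

lemma fourierT_eq_fourier (f : ℝ → ℂ) (ξ : ℝ) : fourierT f ξ = 𝓕 f (ξ * (2 * Real.pi)⁻¹) := by
  rw [Real.fourier_real_eq_integral_exp_smul, fourierT]
  congr 1 with x
  rw [smul_eq_mul]
  congr 2
  have pi_ne_zero : (Real.pi : ℂ) ≠ 0 := mod_cast Real.pi_ne_zero
  push_cast
  field_simp

lemma continuous_fourierT (hf : Integrable f) : Continuous (fourierT f) := by
  rw [funext (fourierT_eq_fourier f)]
  exact (continuous_fourier_of_integrable hf).comp (by fun_prop)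

lemma lintegral_enorm_sq_fourierT_le (hf : Integrable f) :
    ∫⁻ ξ, ‖fourierT f ξ‖ₑ ^ 2 ≤ ENNReal.ofReal (2 * Real.pi) * ∫⁻ x, ‖f x‖ₑ ^ 2 := by
  simp_rw [fourierT_eq_fourier]
  rw [lintegral_comp_mul_right_eq (fun y => ‖𝓕 f y‖ₑ ^ 2) (by positivity), inv_inv,
    abs_of_pos Real.two_pi_pos]
  exact mul_le_mul_right (lintegral_enorm_sq_fourier_le hf) _

lemma integrable_exp_mul_iff {θ : ℝ → ℝ} (hθ : Measurable θ) :
    Integrable (fun x => Complex.exp (Complex.I * θ x) * f x) ↔ Integrable f := by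
  have mul_phase {θ : ℝ → ℝ} (hθ : Measurable θ) {f : ℝ → ℂ} (hf : Integrable f) :
      Integrable (fun x => Complex.exp (Complex.I * θ x) * f x) :=
    hf.bdd_mul (c := 1) (by fun_prop)
      (.of_forall fun x => (Complex.norm_exp_I_mul_ofReal (θ x)).le)
  refine ⟨fun h => ?_, mul_phase hθ⟩
  convert mul_phase hθ.neg h using 2 with x
  simp [← mul_assoc, ← Complex.exp_add]

lemma integrable_fourierT_integrand_iff (f : ℝ → ℂ) (ξ : ℝ) :
    Integrable (fun x : ℝ => Complex.exp (-(Complex.I * x * ξ)) * f x) ↔ Integrable f := by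
  convert integrable_exp_mul_iff (θ := fun x => -(x * ξ)) (by fun_prop) using 5 with x
  push_cast
  ring

lemma fourierT_of_not_integrable (hf : ¬ Integrable f) : fourierT f = 0 :=
  funext fun ξ => integral_undef (mt (integrable_fourierT_integrand_iff f ξ).1 hf)

lemma fourierT_sub (hf : Integrable f) (hg : Integrable g) (ξ : ℝ) :
    fourierT (fun x => f x - g x) ξ = fourierT f ξ - fourierT g ξ := by
  simp only [fourierT, mul_sub]
  exact integral_sub ((integrable_fourierT_integrand_iff f ξ).2 hf)
    ((integrable_fourierT_integrand_iff g ξ).2 hg)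

lemma fourierT_exp_mul (f : ℝ → ℂ) (h ξ : ℝ) :
    fourierT (fun x => Complex.exp (Complex.I * (x * h : ℝ)) * f x) ξ = fourierT f (ξ - h) := by
  refine integral_congr_ae (.of_forall fun x => ?_)
  simp only [← mul_assoc, ← Complex.exp_add]
  congr 2
  push_cast
  ring

lemma fourierT_comp_sub_right (f : ℝ → ℂ) (h ξ : ℝ) :
    fourierT (fun x => f (x - h)) ξ = Complex.exp (Complex.I * (-(ξ * h) : ℝ)) * fourierT f ξ := by
  rw [fourierT, fourierT, ← integral_const_mul,
    ← integral_add_right_eq_self (fun x : ℝ => _ * f (x - h)) h]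
  congr 1 with x
  rw [add_sub_cancel_right, ← mul_assoc, ← Complex.exp_add]
  congr 2
  push_cast
  ring

end FourierT

/-- The squared length of the chord from `1` to `e^{ia}`. The multiplier `e^{ixh} - 1` of a
difference with step `h` has squared modulus `chordSq (x * h)`. -/
noncomputable def chordSq (a : ℝ) : ℝ≥0∞ := ‖Complex.exp (Complex.I * a) - 1‖ₑ ^ 2

@[fun_prop]
lemma continuous_chordSq : Continuous chordSq := by
  unfold chordSq
  fun_prop

lemma chordSq_eq_ofReal_sin (a : ℝ) : chordSq a = ENNReal.ofReal (4 * Real.sin (a / 2) ^ 2) := by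
  rw [chordSq, ← ofReal_norm, ← ENNReal.ofReal_pow (norm_nonneg _),
    Complex.norm_exp_I_mul_ofReal_sub_one, Real.norm_eq_abs, sq_abs]
  ring_nf

lemma chordSq_neg (a : ℝ) : chordSq (-a) = chordSq a := by
  simp only [chordSq_eq_ofReal_sin, neg_div, Real.sin_neg, neg_sq]

lemma chordSq_le_ofReal_sq (a : ℝ) : chordSq a ≤ ENNReal.ofReal (a ^ 2) := by
  rw [chordSq_eq_ofReal_sin]
  refine ENNReal.ofReal_le_ofReal ?_
  have := Real.abs_sin_le_abs (x := a / 2)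
  nlinarith [sq_le_sq.2 this]

lemma chordSq_le_four (a : ℝ) : chordSq a ≤ 4 := by
  rw [chordSq_eq_ofReal_sin, ← ENNReal.ofReal_ofNat]
  exact ENNReal.ofReal_le_ofReal (by linarith [Real.sin_sq_le_one (a / 2)])

lemma enorm_exp_sub_exp_sq (a b : ℝ) :
    ‖Complex.exp (Complex.I * a) - Complex.exp (Complex.I * b)‖ₑ ^ 2 = chordSq (a - b) := by
  have factor : Complex.exp (Complex.I * a) - Complex.exp (Complex.I * b)
      = Complex.exp (Complex.I * b) * (Complex.exp (Complex.I * (a - b : ℝ)) - 1) := by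
    rw [mul_sub, ← Complex.exp_add, mul_one]
    push_cast
    ring_nf
  rw [factor, enorm_mul, Complex.enorm_exp_I_mul_ofReal, one_mul, chordSq]

lemma lintegral_enorm_sq_fourierT_comp_sub_sub_le {f : ℝ → ℂ} (hf : Integrable f) (h : ℝ) :
    ∫⁻ ξ, ‖fourierT f (ξ - h) - fourierT f ξ‖ₑ ^ 2
      ≤ ENNReal.ofReal (2 * Real.pi) * ∫⁻ x, chordSq (x * h) * ‖f x‖ₑ ^ 2 := by
  have hmod : Integrable (fun x => Complex.exp (Complex.I * (x * h : ℝ)) * f x) :=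
    (integrable_exp_mul_iff (by fun_prop)).2 hf
  simp_rw [← fourierT_exp_mul, ← fourierT_sub hmod hf]
  refine (lintegral_enorm_sq_fourierT_le (hmod.sub hf)).trans_eq ?_
  congr 2 with x
  rw [Pi.sub_apply, ← sub_one_mul, enorm_mul, mul_pow, chordSq]

lemma lintegral_chordSq_mul_enorm_sq_fourierT_le {g : ℝ → ℂ} (hg : Integrable g) (h : ℝ) :
    ∫⁻ x, chordSq (x * h) * ‖fourierT g x‖ₑ ^ 2
      ≤ ENNReal.ofReal (2 * Real.pi) * ∫⁻ ξ, ‖g (ξ - h) - g ξ‖ₑ ^ 2 := by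
  refine le_trans (le_of_eq ?_) (lintegral_enorm_sq_fourierT_le ((hg.comp_sub_right h).sub hg))
  congr 1 with x
  rw [fourierT_sub (hg.comp_sub_right h) hg, fourierT_comp_sub_right, ← sub_one_mul, enorm_mul,
    mul_pow, ← chordSq_neg, chordSq]

/-- The action of `e^{it∂ₓ²}` on the Fourier side, `F ↦ e^{-itξ²} F`. -/
noncomputable def schrodMultiplier (t : ℝ) (F : ℝ → ℂ) (ξ : ℝ) : ℂ :=
  Complex.exp (Complex.I * (-(t * ξ ^ 2) : ℝ)) * F ξ

lemma enorm_add_add_sq_le {E : Type*} [SeminormedAddCommGroup E] (a b c : E) :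
    ‖a + b + c‖ₑ ^ 2 ≤ 3 * ‖a‖ₑ ^ 2 + 3 * ‖b‖ₑ ^ 2 + 3 * ‖c‖ₑ ^ 2 := by
  have norm_bound : ‖a + b + c‖ ^ 2 ≤ 3 * ‖a‖ ^ 2 + 3 * ‖b‖ ^ 2 + 3 * ‖c‖ ^ 2 := by
    nlinarith [norm_add₃_le (a := a) (b := b) (c := c), norm_nonneg (a + b + c),
      sq_nonneg (‖a‖ - ‖b‖), sq_nonneg (‖b‖ - ‖c‖), sq_nonneg (‖a‖ - ‖c‖)]
  have nnnorm_bound : ‖a + b + c‖₊ ^ 2 ≤ 3 * ‖a‖₊ ^ 2 + 3 * ‖b‖₊ ^ 2 + 3 * ‖c‖₊ ^ 2 := by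
    exact_mod_cast norm_bound
  simp only [enorm_eq_nnnorm]
  exact_mod_cast nnnorm_bound

-- Comparing both endpoints with the value at the midpoint leaves the phase difference `4tmh`,
-- which has no term quadratic in `h`.
lemma enorm_sq_schrodMultiplier_sub_le (t : ℝ) (F : ℝ → ℂ) (m h : ℝ) :
    ‖schrodMultiplier t F (m - h) - schrodMultiplier t F (m + h)‖ₑ ^ 2
      ≤ 3 * ‖F (m - h) - F m‖ₑ ^ 2 + 3 * ‖F m - F (m + h)‖ₑ ^ 2
        + 3 * (chordSq (4 * t * m * h) * ‖F m‖ₑ ^ 2) := by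
  set e : ℝ → ℂ := fun ξ => Complex.exp (Complex.I * (-(t * ξ ^ 2) : ℝ)) with he
  have split : schrodMultiplier t F (m - h) - schrodMultiplier t F (m + h)
      = e (m - h) * (F (m - h) - F m) + e (m + h) * (F m - F (m + h))
        + (e (m - h) - e (m + h)) * F m := by
    simp only [schrodMultiplier, he]
    ring
  have phase : -(t * (m - h) ^ 2) - -(t * (m + h) ^ 2) = 4 * t * m * h := by ring
  rw [split]
  refine (enorm_add_add_sq_le _ _ _).trans_eq ?_
  simp only [he, enorm_mul, Complex.enorm_exp_I_mul_ofReal, one_mul, mul_pow,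
    enorm_exp_sub_exp_sq, phase]

lemma lintegral_enorm_sq_schrodMultiplier_sub_le (t : ℝ) {F : ℝ → ℂ} (hF : Measurable F) (h : ℝ) :
    ∫⁻ ξ, ‖schrodMultiplier t F (ξ - h) - schrodMultiplier t F ξ‖ₑ ^ 2
      ≤ 6 * (∫⁻ ξ, ‖F (ξ - h / 2) - F ξ‖ₑ ^ 2)
        + 3 * ∫⁻ ξ, chordSq (2 * t * ξ * h) * ‖F ξ‖ₑ ^ 2 := by
  have centre : ∫⁻ ξ, ‖schrodMultiplier t F (ξ - h) - schrodMultiplier t F ξ‖ₑ ^ 2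
      = ∫⁻ m, ‖schrodMultiplier t F (m - h / 2) - schrodMultiplier t F (m + h / 2)‖ₑ ^ 2 := by
    rw [← lintegral_add_right_eq_self _ (h / 2)]
    congr! 6
    ring
  have shift : ∫⁻ m, ‖F m - F (m + h / 2)‖ₑ ^ 2 = ∫⁻ m, ‖F (m - h / 2) - F m‖ₑ ^ 2 := by
    rw [← lintegral_sub_right_eq_self _ (h / 2)]
    simp only [sub_add_cancel]
  calc _ ≤ ∫⁻ m, (3 * ‖F (m - h / 2) - F m‖ₑ ^ 2 + 3 * ‖F m - F (m + h / 2)‖ₑ ^ 2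
          + 3 * (chordSq (2 * t * m * h) * ‖F m‖ₑ ^ 2)) := by
        rw [centre]
        refine lintegral_mono fun m =>
          (enorm_sq_schrodMultiplier_sub_le t F m (h / 2)).trans_eq ?_
        ring_nf
    _ = _ := by
        rw [lintegral_add_left (by fun_prop), lintegral_add_left (by fun_prop),
          lintegral_const_mul' _ _ (by simp), lintegral_const_mul' _ _ (by simp),
          lintegral_const_mul' _ _ (by simp), shift]
        ring

section Schrod

variable {f : ℝ → ℂ}

lemma schrod_eq_fourierT (t : ℝ) (f : ℝ → ℂ) (x : ℝ) :
    schrod t f x = (2 * Real.pi : ℂ)⁻¹ * fourierT (schrodMultiplier t (fourierT f)) (-x) := by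
  rw [schrod, fourierT]
  congr 2 with ξ
  rw [schrodMultiplier, ← mul_assoc, ← Complex.exp_add]
  congr 2
  push_cast
  ring

lemma integrable_schrodMultiplier (t : ℝ) {F : ℝ → ℂ} (hF : Integrable F) :
    Integrable (schrodMultiplier t F) :=
  (integrable_exp_mul_iff (by fun_prop)).2 hF

lemma continuous_schrod (t : ℝ) (hF : Integrable (fourierT f)) : Continuous (schrod t f) := by
  rw [funext (schrod_eq_fourierT t f)]
  have := continuous_fourierT (integrable_schrodMultiplier t hF)
  fun_prop

lemma schrod_of_not_integrable (t : ℝ) (hf : ¬ Integrable f) : schrod t f = 0 := by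
  ext x
  simp [schrod, fourierT_of_not_integrable hf]

lemma enorm_sq_schrod (t : ℝ) (f : ℝ → ℂ) (x : ℝ) :
    ‖schrod t f x‖ₑ ^ 2 = ENNReal.ofReal (2 * Real.pi)⁻¹ ^ 2
      * ‖fourierT (schrodMultiplier t (fourierT f)) (-x)‖ₑ ^ 2 := by
  have inv_two_pi : ‖(2 * Real.pi : ℂ)⁻¹‖ₑ = ENNReal.ofReal (2 * Real.pi)⁻¹ := by
    rw [← ofReal_norm, norm_inv, norm_mul, Complex.norm_ofNat, Complex.norm_real,
      Real.norm_of_nonneg Real.pi_pos.le]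
  rw [schrod_eq_fourierT, enorm_mul, mul_pow, inv_two_pi]

lemma lintegral_chordSq_mul_enorm_sq_schrod_le_sub (t : ℝ) (hF : Integrable (fourierT f)) (h : ℝ) :
    ∫⁻ x, chordSq (x * h) * ‖schrod t f x‖ₑ ^ 2 ≤ ENNReal.ofReal (2 * Real.pi)⁻¹ *
      ∫⁻ ξ, ‖schrodMultiplier t (fourierT f) (ξ - h) - schrodMultiplier t (fourierT f) ξ‖ₑ ^ 2 := by
  set G := schrodMultiplier t (fourierT f)
  have reflect : ∫⁻ x, chordSq (x * h) * ‖fourierT G (-x)‖ₑ ^ 2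
      = ∫⁻ x, chordSq (x * h) * ‖fourierT G x‖ₑ ^ 2 := by
    rw [← lintegral_neg_eq_self]
    simp only [neg_mul, chordSq_neg, neg_neg]
  calc _ = ENNReal.ofReal (2 * Real.pi)⁻¹ ^ 2 * ∫⁻ x, chordSq (x * h) * ‖fourierT G x‖ₑ ^ 2 := by
        rw [← reflect, ← lintegral_const_mul' _ _ (by finiteness)]
        simp only [enorm_sq_schrod, mul_left_comm, G]
    _ ≤ ENNReal.ofReal (2 * Real.pi)⁻¹ ^ 2
          * (ENNReal.ofReal (2 * Real.pi) * ∫⁻ ξ, ‖G (ξ - h) - G ξ‖ₑ ^ 2) := by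
        gcongr _ * ?_
        exact lintegral_chordSq_mul_enorm_sq_fourierT_le (integrable_schrodMultiplier t hF) h
    _ = _ := by
        rw [← mul_assoc, pow_two, mul_assoc (ENNReal.ofReal _),
          ← ENNReal.ofReal_mul (by positivity), inv_mul_cancel₀ (by positivity),
          ENNReal.ofReal_one, mul_one]

lemma lintegral_chordSq_mul_enorm_sq_schrod_le (t : ℝ) (hf : Integrable f)
    (hF : Integrable (fourierT f)) (h : ℝ) :
    ∫⁻ x, chordSq (x * h) * ‖schrod t f x‖ₑ ^ 2
      ≤ 6 * (∫⁻ x, chordSq (x * (h / 2)) * ‖f x‖ₑ ^ 2)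
        + ∫⁻ η, chordSq (2 * t * η * h) * ‖fourierT f η‖ₑ ^ 2 := by
  set p := ENNReal.ofReal (2 * Real.pi)⁻¹
  have p_mul : p * ENNReal.ofReal (2 * Real.pi) = 1 := by
    rw [← ENNReal.ofReal_mul (by positivity), inv_mul_cancel₀ (by positivity), ENNReal.ofReal_one]
  have p_mul_three : p * 3 ≤ 1 := by
    rw [← p_mul, ← ENNReal.ofReal_ofNat 3]
    gcongr
    linarith [Real.pi_gt_three]
  calc _ ≤ p * (6 * (∫⁻ ξ, ‖fourierT f (ξ - h / 2) - fourierT f ξ‖ₑ ^ 2)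
          + 3 * ∫⁻ η, chordSq (2 * t * η * h) * ‖fourierT f η‖ₑ ^ 2) := by
        refine (lintegral_chordSq_mul_enorm_sq_schrod_le_sub t hF h).trans ?_
        gcongr _ * ?_
        exact lintegral_enorm_sq_schrodMultiplier_sub_le t (continuous_fourierT hf).measurable h
    _ ≤ p * (6 * (ENNReal.ofReal (2 * Real.pi) * ∫⁻ x, chordSq (x * (h / 2)) * ‖f x‖ₑ ^ 2)
          + 3 * ∫⁻ η, chordSq (2 * t * η * h) * ‖fourierT f η‖ₑ ^ 2) := by
        gcongr _ * (_ * ?_ + _)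
        exact lintegral_enorm_sq_fourierT_comp_sub_sub_le hf (h / 2)
    _ = p * ENNReal.ofReal (2 * Real.pi) * (6 * ∫⁻ x, chordSq (x * (h / 2)) * ‖f x‖ₑ ^ 2)
          + p * 3 * ∫⁻ η, chordSq (2 * t * η * h) * ‖fourierT f η‖ₑ ^ 2 := by ring
    _ ≤ _ := by
        rw [p_mul, one_mul]
        gcongr
        exact mul_le_of_le_one_left' p_mul_three

end Schrod

section PowerWeights

open scoped Topology

/-- The constant `c_r = ∫ |h|^{-1-2r} |e^{ih} - 1|² dh` in the subordination formula
`c_r |x|^{2r} = ∫ |h|^{-1-2r} |e^{ixh} - 1|² dh`; it is finite exactly for `0 < r < 1`. -/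
noncomputable def subordinationConst (r : ℝ) : ℝ≥0∞ :=
  ∫⁻ h : ℝ, ENNReal.ofReal (|h| ^ (-1 - 2 * r)) * chordSq h

lemma lintegral_rpow_mul_comp_mul_right (s : ℝ) (φ : ℝ → ℝ≥0∞) {x : ℝ} (hx : x ≠ 0) :
    ∫⁻ h : ℝ, ENNReal.ofReal (|h| ^ s) * φ (h * x)
      = ENNReal.ofReal (|x| ^ (-1 - s)) * ∫⁻ h : ℝ, ENNReal.ofReal (|h| ^ s) * φ h := by
  have abs_pos : 0 < |x| := abs_pos.2 hx
  have integrand (h : ℝ) : ENNReal.ofReal (|h| ^ s) * φ (h * x)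
      = ENNReal.ofReal (|x| ^ (-s)) * (ENNReal.ofReal (|h * x| ^ s) * φ (h * x)) := by
    rw [← mul_assoc, ← ENNReal.ofReal_mul (by positivity), abs_mul,
      Real.mul_rpow (by positivity) (by positivity), mul_left_comm, ← Real.rpow_add abs_pos,
      neg_add_cancel, Real.rpow_zero, mul_one]
  rw [lintegral_congr integrand, lintegral_const_mul' _ _ (by finiteness),
    lintegral_comp_mul_right_eq (fun h => ENNReal.ofReal (|h| ^ s) * φ h) hx, ← mul_assoc,
    ← ENNReal.ofReal_mul (by positivity), abs_inv, ← Real.rpow_neg_one, ← Real.rpow_add abs_pos]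
  ring_nf

variable {r : ℝ}

lemma lintegral_rpow_mul_chordSq (hr : 0 < r) (x : ℝ) :
    ∫⁻ h : ℝ, ENNReal.ofReal (|h| ^ (-1 - 2 * r)) * chordSq (x * h)
      = subordinationConst r * ENNReal.ofReal (|x| ^ (2 * r)) := by
  obtain rfl | hx := eq_or_ne x 0
  · have : 2 * r ≠ 0 := by positivity
    simp [chordSq, Real.zero_rpow this]
  · simp_rw [mul_comm x]
    rw [lintegral_rpow_mul_comp_mul_right _ _ hx, mul_comm, subordinationConst]
    ring_nf

lemma integrable_rpow_mul_min_sq (hr : 0 < r) (hr1 : r < 1) :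
    Integrable fun h : ℝ => ‖h‖ ^ (-1 - 2 * r) * min (‖h‖ ^ 2) 4 := by
  rw [integrable_fun_norm_addHaar volume (f := fun y => y ^ (-1 - 2 * r) * min (y ^ 2) 4)]
  simp only [Module.finrank_self, tsub_self, pow_zero, one_smul]
  have measurable (S : Set ℝ) : AEStronglyMeasurable
      (fun y : ℝ => y ^ (-1 - 2 * r) * min (y ^ 2) 4) (volume.restrict S) :=
    Measurable.aestronglyMeasurable (by fun_prop)
  have near_zero : IntegrableOn (fun y : ℝ => y ^ (1 - 2 * r)) (Set.Ioc 0 1) := by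
    rw [← intervalIntegrable_iff_integrableOn_Ioc_of_le zero_le_one]
    exact intervalIntegral.intervalIntegrable_rpow' (by linarith)
  have near_infty : IntegrableOn (fun y : ℝ => y ^ (-1 - 2 * r) * 4) (Set.Ioi 1) :=
    (integrableOn_Ioi_rpow_of_lt (by linarith) one_pos).mul_const 4
  rw [← Set.Ioc_union_Ioi_eq_Ioi zero_le_one]
  refine .union (near_zero.mono' (measurable _) ?_) (near_infty.mono' (measurable _) ?_)
  · refine ae_restrict_of_forall_mem measurableSet_Ioc fun y hy => ?_
    have hy0 : 0 < y := hy.1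
    rw [Real.norm_of_nonneg (by positivity)]
    calc y ^ (-1 - 2 * r) * min (y ^ 2) 4 ≤ y ^ (-1 - 2 * r) * y ^ (2 : ℝ) := by
          rw [Real.rpow_two]
          gcongr
          exact min_le_left _ _
      _ = y ^ (1 - 2 * r) := by rw [← Real.rpow_add hy0]; ring_nf
  · refine ae_restrict_of_forall_mem measurableSet_Ioi fun y (hy : 1 < y) => ?_
    have : 0 < y := one_pos.trans hy
    rw [Real.norm_of_nonneg (by positivity)]
    gcongr
    exact min_le_right _ _

lemma subordinationConst_ne_top (hr : 0 < r) (hr1 : r < 1) : subordinationConst r ≠ ⊤ := by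
  refine ne_top_of_le_ne_top (integrable_rpow_mul_min_sq hr hr1).lintegral_lt_top.ne
    (lintegral_mono fun h => ?_)
  rw [Real.norm_eq_abs, sq_abs, ENNReal.ofReal_mul (by positivity), ENNReal.ofReal_min]
  gcongr
  exact le_min (chordSq_le_ofReal_sq h) (by simpa using chordSq_le_four h)

lemma subordinationConst_ne_zero (r : ℝ) : subordinationConst r ≠ 0 := by
  rw [← pos_iff_ne_zero, subordinationConst, lintegral_pos_iff_support (by fun_prop)]
  refine lt_of_lt_of_le ?_ (measure_mono (s := Set.Ioo 0 1) fun h hh => ?_)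
  · simp
  have sin_pos : 0 < Real.sin (h / 2) :=
    Real.sin_pos_of_pos_of_lt_pi (by linarith [hh.1]) (by linarith [hh.2, Real.pi_gt_three])
  have abs_pos : 0 < |h| := abs_pos.2 hh.1.ne'
  rw [Function.mem_support, chordSq_eq_ofReal_sin, ← ENNReal.ofReal_mul (by positivity)]
  exact (ENNReal.ofReal_pos.2 (by positivity)).ne'

variable {μ ν : Measure ℝ}

lemma lintegral_rpow_mul_lintegral_chordSq [SFinite μ] (hr : 0 < r) (hr1 : r < 1) :
    ∫⁻ h : ℝ, ENNReal.ofReal (|h| ^ (-1 - 2 * r)) * ∫⁻ x, chordSq (x * h) ∂μ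
      = subordinationConst r * ∫⁻ x, ENNReal.ofReal (|x| ^ (2 * r)) ∂μ := by
  simp_rw [← lintegral_const_mul' _ _ ENNReal.ofReal_ne_top]
  rw [lintegral_lintegral_swap (by fun_prop)]
  simp_rw [lintegral_rpow_mul_chordSq hr]
  rw [lintegral_const_mul' _ _ (subordinationConst_ne_top hr hr1)]

lemma lintegral_rpow_le_of_lintegral_chordSq_le_of_lt_one [SFinite μ] [SFinite ν]
    (hr : 0 < r) (hr1 : r < 1)
    (hμν : ∀ h : ℝ, ∫⁻ x, chordSq (x * h) ∂μ ≤ ∫⁻ x, chordSq (x * h) ∂ν) :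
    ∫⁻ x, ENNReal.ofReal (|x| ^ (2 * r)) ∂μ ≤ ∫⁻ x, ENNReal.ofReal (|x| ^ (2 * r)) ∂ν := by
  rw [← ENNReal.mul_le_mul_iff_right (subordinationConst_ne_zero r)
      (subordinationConst_ne_top hr hr1),
    ← lintegral_rpow_mul_lintegral_chordSq hr hr1, ← lintegral_rpow_mul_lintegral_chordSq hr hr1]
  exact lintegral_mono fun h => mul_le_mul_right (hμν h) _

lemma tendsto_inv_sq_mul_chordSq (x : ℝ) :
    Tendsto (fun h : ℝ => ENNReal.ofReal (h ^ 2)⁻¹ * chordSq (x * h)) (𝓝[≠] 0)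
      (𝓝 (ENNReal.ofReal (x ^ 2))) := by
  have deriv_sin : HasDerivAt (fun h : ℝ => 2 * Real.sin (x * h / 2)) x 0 := by
    simpa [mul_div_cancel₀] using
      (((hasDerivAt_id (0 : ℝ)).const_mul x).div_const 2).sin.const_mul 2
  have slope := (deriv_sin.tendsto_slope_zero).pow 2
  refine (ENNReal.tendsto_ofReal slope).congr fun h => ?_
  rw [chordSq_eq_ofReal_sin, ← ENNReal.ofReal_mul (by positivity)]
  congr 1
  simp only [zero_add, mul_zero, zero_div, Real.sin_zero, sub_zero, smul_eq_mul]
  ring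

lemma inv_sq_mul_chordSq_le {h : ℝ} (hh : h ≠ 0) (x : ℝ) :
    ENNReal.ofReal (h ^ 2)⁻¹ * chordSq (x * h) ≤ ENNReal.ofReal (x ^ 2) := by
  calc _ ≤ ENNReal.ofReal (h ^ 2)⁻¹ * ENNReal.ofReal ((x * h) ^ 2) := by
        gcongr
        exact chordSq_le_ofReal_sq _
    _ = _ := by
        rw [← ENNReal.ofReal_mul (by positivity)]
        field_simp

lemma lintegral_sq_le_of_lintegral_chordSq_le
    (hμν : ∀ h : ℝ, ∫⁻ x, chordSq (x * h) ∂μ ≤ ∫⁻ x, chordSq (x * h) ∂ν) :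
    ∫⁻ x, ENNReal.ofReal (x ^ 2) ∂μ ≤ ∫⁻ x, ENNReal.ofReal (x ^ 2) ∂ν := by
  calc ∫⁻ x, ENNReal.ofReal (x ^ 2) ∂μ
      = ∫⁻ x, liminf (fun h : ℝ => ENNReal.ofReal (h ^ 2)⁻¹ * chordSq (x * h)) (𝓝[≠] 0) ∂μ :=
        lintegral_congr fun x => (tendsto_inv_sq_mul_chordSq x).liminf_eq.symm
    _ ≤ liminf (fun h : ℝ => ∫⁻ x, ENNReal.ofReal (h ^ 2)⁻¹ * chordSq (x * h) ∂μ) (𝓝[≠] 0) :=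
        lintegral_liminf_le fun h => by fun_prop
    _ ≤ ∫⁻ x, ENNReal.ofReal (x ^ 2) ∂ν := by
        refine liminf_le_of_frequently_le'
          (Eventually.frequently (eventually_mem_nhdsWithin.mono fun h hh => ?_))
        rw [lintegral_const_mul' _ _ (by finiteness)]
        grw [hμν h]
        rw [← lintegral_const_mul' _ _ (by finiteness)]
        exact lintegral_mono (inv_sq_mul_chordSq_le hh)

lemma lintegral_rpow_le_of_lintegral_chordSq_le [SFinite μ] [SFinite ν] (hr : r ∈ Set.Ioc 0 1)
    (hμν : ∀ h : ℝ, ∫⁻ x, chordSq (x * h) ∂μ ≤ ∫⁻ x, chordSq (x * h) ∂ν) :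
    ∫⁻ x, ENNReal.ofReal (|x| ^ (2 * r)) ∂μ ≤ ∫⁻ x, ENNReal.ofReal (|x| ^ (2 * r)) ∂ν := by
  obtain hr1 | rfl := hr.2.lt_or_eq
  · exact lintegral_rpow_le_of_lintegral_chordSq_le_of_lt_one hr.1 hr1 hμν
  · simpa using lintegral_sq_le_of_lintegral_chordSq_le hμν

end PowerWeights

section WeightedBound

variable {r : ℝ} {f : ℝ → ℂ}

lemma lintegral_enorm_sq_schrod_mul_rpow_le (hr : r ∈ Set.Ioc 0 1) (t : ℝ) (hf : Integrable f)
    (hF : Integrable (fourierT f)) :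
    ∫⁻ x, ‖schrod t f x‖ₑ ^ 2 * ENNReal.ofReal (|x| ^ (2 * r))
      ≤ 6 * (∫⁻ x, ‖f x‖ₑ ^ 2 * ENNReal.ofReal (|2⁻¹ * x| ^ (2 * r)))
        + ∫⁻ ξ, ‖fourierT f ξ‖ₑ ^ 2 * ENNReal.ofReal (|2 * t * ξ| ^ (2 * r)) := by
  let μ : Measure ℝ := (volume.withDensity fun x => ‖schrod t f x‖ₑ ^ 2).map id
  let ν : Measure ℝ := (6 : ℝ≥0∞) • (volume.withDensity fun x => ‖f x‖ₑ ^ 2).map (2⁻¹ * ·)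
    + (volume.withDensity fun ξ => ‖fourierT f ξ‖ₑ ^ 2).map (2 * t * ·)
  have lintegral_μ (φ : ℝ → ℝ≥0∞) (hφ : Measurable φ) :
      ∫⁻ x, φ x ∂μ = ∫⁻ x, ‖schrod t f x‖ₑ ^ 2 * φ x :=
    lintegral_map_withDensity ((continuous_schrod t hF).measurable.enorm.pow_const 2).aemeasurable
      measurable_id hφ
  have lintegral_ν (φ : ℝ → ℝ≥0∞) (hφ : Measurable φ) :
      ∫⁻ x, φ x ∂ν = 6 * (∫⁻ x, ‖f x‖ₑ ^ 2 * φ (2⁻¹ * x))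
        + ∫⁻ ξ, ‖fourierT f ξ‖ₑ ^ 2 * φ (2 * t * ξ) := by
    rw [lintegral_add_measure, lintegral_smul_measure, smul_eq_mul,
      lintegral_map_withDensity (hf.1.enorm.pow_const 2) (by fun_prop) hφ,
      lintegral_map_withDensity (hF.1.enorm.pow_const 2) (by fun_prop) hφ]
  rw [← lintegral_μ _ (by fun_prop), ← lintegral_ν (fun x => ENNReal.ofReal (|x| ^ (2 * r)))
    (by fun_prop)]
  refine lintegral_rpow_le_of_lintegral_chordSq_le hr fun h => ?_
  rw [lintegral_μ _ (by fun_prop), lintegral_ν (fun x => chordSq (x * h)) (by fun_prop)]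
  simp_rw [mul_comm (‖_‖ₑ ^ 2)]
  convert lintegral_chordSq_mul_enorm_sq_schrod_le t hf hF h using 7
  ring

lemma lintegral_enorm_sq_mul_rpow_eq_wNorm_sq (r : ℝ) (f : ℝ → ℂ) :
    ∫⁻ x, ‖f x‖ₑ ^ 2 * ENNReal.ofReal (|x| ^ (2 * r)) = wNorm r f ^ 2 := by
  rw [wNorm, ← ENNReal.rpow_natCast, ← ENNReal.rpow_mul]
  norm_num [enorm_eq_nnnorm]

lemma lintegral_enorm_sq_mul_rpow_mul_eq (r c : ℝ) (f : ℝ → ℂ) :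
    ∫⁻ x, ‖f x‖ₑ ^ 2 * ENNReal.ofReal (|c * x| ^ (2 * r))
      = (ENNReal.ofReal (|c| ^ r) * wNorm r f) ^ 2 := by
  have weight (x : ℝ) : ENNReal.ofReal (|c * x| ^ (2 * r))
      = ENNReal.ofReal (|c| ^ r) ^ 2 * ENNReal.ofReal (|x| ^ (2 * r)) := by
    rw [abs_mul, Real.mul_rpow (abs_nonneg c) (abs_nonneg x), ENNReal.ofReal_mul (by positivity),
      mul_comm 2 r, Real.rpow_mul (abs_nonneg c), Real.rpow_two, ENNReal.ofReal_pow (by positivity)]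
  simp_rw [weight, mul_left_comm (‖_‖ₑ ^ 2)]
  rw [lintegral_const_mul' _ _ (by finiteness), lintegral_enorm_sq_mul_rpow_eq_wNorm_sq, mul_pow]

lemma wNorm_schrod_le (hr : r ∈ Set.Ioc 0 1) (t : ℝ) (hf : Integrable f)
    (hF : Integrable (fourierT f)) :
    wNorm r (schrod t f) ≤ ENNReal.ofReal (2 * |t| ^ r) * wNorm r (fourierT f) + 3 * wNorm r f := by
  have half_rpow_le : ENNReal.ofReal (|2⁻¹| ^ r) ≤ 1 :=
    ENNReal.ofReal_le_one.2 (Real.rpow_le_one (abs_nonneg _) (by norm_num [abs_of_pos]) hr.1.le)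
  have two_mul_rpow_le : |2 * t| ^ r ≤ 2 * |t| ^ r := by
    rw [abs_mul, abs_two, Real.mul_rpow zero_le_two (abs_nonneg t)]
    gcongr
    simpa using Real.rpow_le_rpow_of_exponent_le one_le_two hr.2
  rw [← ENNReal.pow_le_pow_left_iff two_ne_zero, ← lintegral_enorm_sq_mul_rpow_eq_wNorm_sq]
  calc _ ≤ 6 * (ENNReal.ofReal (|2⁻¹| ^ r) * wNorm r f) ^ 2
          + (ENNReal.ofReal (|2 * t| ^ r) * wNorm r (fourierT f)) ^ 2 := by
        simpa only [lintegral_enorm_sq_mul_rpow_mul_eq]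
          using lintegral_enorm_sq_schrod_mul_rpow_le hr t hf hF
    _ ≤ 3 ^ 2 * (1 * wNorm r f) ^ 2
          + (ENNReal.ofReal (2 * |t| ^ r) * wNorm r (fourierT f)) ^ 2 := by
        gcongr
        norm_num
    _ ≤ (3 * wNorm r f) ^ 2 + (ENNReal.ofReal (2 * |t| ^ r) * wNorm r (fourierT f)) ^ 2 := by
        rw [one_mul, mul_pow 3]
    _ ≤ _ := by
        rw [add_comm]
        exact pow_add_pow_le zero_le zero_le two_ne_zero

lemma wNorm_fourierT_le_HsNorm {s : ℝ} (hr : 0 ≤ r) (hrs : r ≤ s) (f : ℝ → ℂ) :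
    wNorm r (fourierT f) ≤ HsNorm s f := by
  refine ENNReal.rpow_le_rpow (lintegral_mono fun ξ => ?_) (by norm_num)
  have weight_le : |ξ| ^ (2 * r) ≤ (1 + ξ ^ 2) ^ s := by
    rw [Real.rpow_mul (abs_nonneg ξ), Real.rpow_two, sq_abs]
    calc (ξ ^ 2) ^ r ≤ (1 + ξ ^ 2) ^ r := by gcongr; linarith
      _ ≤ (1 + ξ ^ 2) ^ s := Real.rpow_le_rpow_of_exponent_le (by nlinarith) hrs
  rw [← enorm_eq_nnnorm, ← ofReal_norm, ← ENNReal.ofReal_pow (norm_nonneg _),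
    ← ENNReal.ofReal_mul (by positivity), mul_comm]
  gcongr

lemma integrable_fourierT_of_memHs {s : ℝ} (hs : 1 / 2 < s) (hf : MemHs s f) :
    Integrable (fourierT f) := by
  by_cases hfi : Integrable f
  swap
  · rw [fourierT_of_not_integrable hfi]
    exact integrable_zero _ _ _
  have hmeas : Measurable (fourierT f) := (continuous_fourierT hfi).measurable
  have weight_integrable : Integrable fun ξ : ℝ => (1 + ξ ^ 2) ^ (-s) := by
    simpa [neg_div] using integrable_rpow_neg_one_add_norm_sq (E := ℝ) (μ := volume) (r := 2 * s)
      (by simp; linarith)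
  have energy_integrable : Integrable fun ξ : ℝ => (1 + ξ ^ 2) ^ s * ‖fourierT f ξ‖ ^ 2 := by
    refine ⟨Measurable.aestronglyMeasurable (by fun_prop), ?_⟩
    rw [hasFiniteIntegral_iff_ofReal (.of_forall fun ξ => by positivity)]
    exact (ENNReal.rpow_lt_top_iff_of_pos (by norm_num)).1 hf
  refine (weight_integrable.add energy_integrable).mono' hmeas.aestronglyMeasurable
    (.of_forall fun ξ => ?_)
  have weight_pos : 0 < (1 + ξ ^ 2) ^ s := by positivity
  set w := (1 + ξ ^ 2) ^ s with hw
  have amgm : w⁻¹ + w * ‖fourierT f ξ‖ ^ 2 - ‖fourierT f ξ‖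
      = w⁻¹ * ((w * ‖fourierT f ξ‖ - 1 / 2) ^ 2 + 3 / 4) := by
    field_simp
    ring
  rw [Pi.add_apply, Real.rpow_neg (by positivity), ← hw, ← sub_nonneg, amgm]
  positivity

end WeightedBound

theorem weighted_free_group_bound_general {r s : ℝ} (hr : r ∈ Set.Ioc 0 1) (hrs : r ≤ s)
    (hs : 1 / 2 < s) (T : ℝ) {φ₀ : ℝ → ℂ} (hφ₀ : MemHs s φ₀) :
    (⨆ t ∈ Set.Icc (0 : ℝ) T, wNorm r (schrod t φ₀))
      ≤ ENNReal.ofReal (2 * T ^ r) * HsNorm s φ₀ + 3 * wNorm r φ₀ := by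
  refine iSup₂_le fun t ht => ?_
  by_cases hint : Integrable φ₀
  · calc wNorm r (schrod t φ₀)
        ≤ ENNReal.ofReal (2 * |t| ^ r) * wNorm r (fourierT φ₀) + 3 * wNorm r φ₀ :=
          wNorm_schrod_le hr t hint (integrable_fourierT_of_memHs hs hφ₀)
      _ ≤ _ := by
          rw [abs_of_nonneg ht.1]
          gcongr ENNReal.ofReal (2 * ?_) * ?_ + _
          · exact Real.rpow_le_rpow ht.1 ht.2 hr.1.le
          · exact wNorm_fourierT_le_HsNorm hr.1.le hrs φ₀
  · -- Here the Bochner integral defining `fourierT φ₀` takes the junk value `0`.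
    simp [schrod_of_not_integrable t hint, wNorm]

/-- **Estimate (3.6)/(2.8) (weighted bound for the free Schrödinger group).** For
`r ∈ (0,1]` there is `C > 0` such that for all `T > 0` and `φ₀ ∈ H¹(ℝ) ∩ L²(|x|^{2r}dx)`:
`sup_{t∈[0,T]} ‖|x|^r e^{it∂ₓ²}φ₀‖_{L²} ≤ C[(T^{r/2}+T^r)‖φ₀‖_{H¹} + ‖|x|^r φ₀‖_{L²}]`. -/
theorem weighted_free_group_bound (r : ℝ) (hr : r ∈ Set.Ioc (0:ℝ) 1) :
    ∃ C > (0:ℝ), ∀ T > (0:ℝ), ∀ φ₀ : ℝ → ℂ, MemHs 1 φ₀ → MemW r φ₀ →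
      (⨆ t ∈ Set.Icc (0:ℝ) T, wNorm r (schrod t φ₀))
        ≤ ENNReal.ofReal (C * (T ^ (r/2) + T ^ r)) * HsNorm 1 φ₀
          + ENNReal.ofReal C * wNorm r φ₀ := by
  refine ⟨3, by norm_num, fun T hT φ₀ hφ₀ _ =>
    (weighted_free_group_bound_general hr hr.2 one_half_lt_one T hφ₀).trans ?_⟩
  have coeff_le : 2 * T ^ r ≤ 3 * (T ^ (r / 2) + T ^ r) := by
    linarith [Real.rpow_pos_of_pos hT (r / 2), Real.rpow_pos_of_pos hT r]
  rw [ENNReal.ofReal_ofNat]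
  gcongr
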